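/- For every complex number q with |q| < 1, with x(q) = (q; q^2)_∞ / (q^3; q^6)_∞^3, one has the 2-dissection 2 q x(q) = −2 q^2 (q^2; q^2)_∞^2 (q^{12}; q^{12})_∞^6 / ((q^6; q^6)_∞^6 (q^4; q^4)_∞^2) + 2 q (q^4; q^4)_∞^2 (q^{12}; q^{12})_∞^2 / (q^6; q^6)_∞^4. -/

import Mathlib

/-- The q-shifted factorial `(a; q)_∞ = ∏_{n=0}^∞ (1 - a qⁿ)`. -/
noncomputable def qPoch (a q : ℂ) : ℂ := ∏' n : ℕ, (1 - a * q ^ n)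

/-- `x(q) = (q; q²)_∞ / (q³; q⁶)_∞³`. -/
noncomputable def x (q : ℂ) : ℂ := qPoch q (q ^ 2) / qPoch (q ^ 3) (q ^ 6) ^ 3

/-!
Write `E k = (q^k; q^k)_∞`. Splitting the products over residue classes gives
`x(q) = E 1 * E 6 ^ 3 / (E 2 * E 3 ^ 3)`. Up to the factor `E 12 ^ 2 / E 6 ^ 4`, which is even
in `q`, this is a product of two theta series in the nome `q ^ 3`. Substituting
`(m, n) = (s - t, s + t)` or `(s - t, s + t + 1)`, according to the parity of `m + n`, turns such a
product into a combination of theta series in the nome `q ^ 6`: this separates the even and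
the odd part. The Jacobi triple product, obtained as the limit of a finite version,
evaluates all the theta series involved.
-/

open Filter Topology

lemma norm_pow_lt_one {𝕜 : Type*} [NormedDivisionRing 𝕜] {q : 𝕜} (hq : ‖q‖ < 1) {k : ℕ}
    (hk : k ≠ 0) : ‖q ^ k‖ < 1 := by
  rw [norm_pow]
  exact pow_lt_one₀ (norm_nonneg _) hq hk

/-! ### Infinite products -/

section qPoch

variable {q : ℂ}

lemma summable_norm_neg_mul_pow (a : ℂ) (hq : ‖q‖ < 1) : Summable fun n : ℕ ↦ ‖-(a * q ^ n)‖ := by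
  simp only [norm_neg, norm_mul, norm_pow]
  exact (summable_geometric_of_lt_one (norm_nonneg _) hq).mul_left _

lemma multipliable_one_sub_mul_pow (a : ℂ) (hq : ‖q‖ < 1) :
    Multipliable fun n : ℕ ↦ 1 - a * q ^ n := by
  simpa only [sub_eq_add_neg] using
    multipliable_one_add_of_summable (summable_norm_neg_mul_pow a hq)

lemma tendsto_prod_range_qPoch (a : ℂ) (hq : ‖q‖ < 1) :
    Tendsto (fun N ↦ ∏ i ∈ Finset.range N, (1 - a * q ^ i)) atTop (𝓝 (qPoch a q)) :=
  (multipliable_one_sub_mul_pow a hq).hasProd.tendsto_prod_nat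

lemma qPoch_ne_zero {a : ℂ} (hq : ‖q‖ < 1) (ha : ∀ n : ℕ, a * q ^ n ≠ 1) : qPoch a q ≠ 0 := by
  simpa only [qPoch, sub_eq_add_neg] using
    tprod_one_add_ne_zero_of_summable (f := fun n : ℕ ↦ -(a * q ^ n))
      (fun n ↦ by simpa only [← sub_eq_add_neg] using sub_ne_zero.2 (ha n).symm)
      (summable_norm_neg_mul_pow a hq)

lemma qPoch_self_ne_zero (hq : ‖q‖ < 1) : qPoch q q ≠ 0 := by
  refine qPoch_ne_zero hq fun n h ↦ ?_
  have hn := norm_pow_lt_one hq n.succ_ne_zero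
  rw [pow_succ', h, norm_one] at hn
  exact hn.false

lemma qPoch_eq_prod_fin (a : ℂ) (hq : ‖q‖ < 1) (m : ℕ) [NeZero m] :
    qPoch a q = ∏ j : Fin m, qPoch (a * q ^ (j : ℕ)) (q ^ m) := by
  obtain ⟨e, he⟩ : ∃ e : Fin m × ℕ ≃ ℕ, ∀ j n, e (j, n) = n * m + j :=
    ⟨(Equiv.prodComm _ _).trans (Nat.divModEquiv m).symm, fun _ _ ↦ rfl⟩
  have term (j : Fin m) (n : ℕ) :
      1 - a * q ^ e (j, n) = 1 - a * q ^ (j : ℕ) * (q ^ m) ^ n := by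
    rw [he]
    ring
  have hqm := norm_pow_lt_one hq (NeZero.ne m)
  have hmul : Multipliable fun p ↦ 1 - a * q ^ e p :=
    e.multipliable_iff.2 (multipliable_one_sub_mul_pow a hq)
  rw [qPoch, ← e.tprod_eq, hmul.tprod_prod', tprod_fintype]
  · simp only [term, qPoch]
  · intro j
    simpa only [term] using multipliable_one_sub_mul_pow _ hqm

lemma qPoch_mul_qPoch_neg (a : ℂ) (hq : ‖q‖ < 1) :
    qPoch a q * qPoch (-a) q = qPoch (a ^ 2) (q ^ 2) := by
  rw [qPoch, qPoch, qPoch, ← (multipliable_one_sub_mul_pow a hq).tprod_mul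
    (multipliable_one_sub_mul_pow (-a) hq)]
  exact tprod_congr fun n ↦ by ring

lemma qPoch_self_sq (hq : ‖q‖ < 1) :
    qPoch q (q ^ 2) = qPoch q q / qPoch (q ^ 2) (q ^ 2) := by
  have h := qPoch_eq_prod_fin q hq 2
  simp only [Fin.prod_univ_two, Fin.val_zero, Fin.val_one, pow_zero, pow_one, mul_one, ← sq] at h
  rw [h, mul_div_cancel_right₀ _ (qPoch_self_ne_zero (norm_pow_lt_one hq two_ne_zero))]

lemma qPoch_neg_self_sq (hq : ‖q‖ < 1) :
    qPoch (-q) (q ^ 2) =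
      qPoch (q ^ 2) (q ^ 2) ^ 2 / (qPoch q q * qPoch (q ^ 4) (q ^ 4)) := by
  have hq2 := norm_pow_lt_one hq two_ne_zero
  have h1 := qPoch_self_ne_zero hq
  have h2 := qPoch_self_ne_zero hq2
  have h := qPoch_mul_qPoch_neg q hq2
  rw [qPoch_self_sq hq, qPoch_self_sq hq2, ← pow_mul] at h
  rw [← div_div, ← mul_right_inj' (div_ne_zero h1 h2), h]
  field_simp

lemma x_eq_div (hq : ‖q‖ < 1) :
    x q = qPoch q q * qPoch (q ^ 6) (q ^ 6) ^ 3 /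
      (qPoch (q ^ 2) (q ^ 2) * qPoch (q ^ 3) (q ^ 3) ^ 3) := by
  have h3 := qPoch_self_sq (norm_pow_lt_one hq three_ne_zero)
  rw [← pow_mul] at h3
  rw [x, qPoch_self_sq hq, h3, div_pow, div_div_div_eq]

end qPoch

/-! ### The finite Jacobi triple product -/

section FiniteTripleProduct

variable {𝕜 : Type*} [Field 𝕜] {q : 𝕜}

/-- The finite Euler product `(q; q)_n = (1 - q) (1 - q²) ⋯ (1 - qⁿ)`. -/
def eulerProd (q : 𝕜) (n : ℕ) : 𝕜 := ∏ i ∈ Finset.range n, (1 - q ^ (i + 1))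

/-- The reciprocal `1 / (q; q)_k`, extended by zero to negative `k`; the extension makes
`invEulerProd_sub_one` hold for all `k`. -/
def invEulerProd (q : 𝕜) (k : ℤ) : 𝕜 := if 0 ≤ k then (eulerProd q k.toNat)⁻¹ else 0

/-- The central Gaussian binomial coefficient `(q; q)_{2N} / ((q; q)_{N-n} (q; q)_{N+n})`, which
vanishes for `N < |n|`. -/
def centralGaussBinom (q : 𝕜) (N : ℕ) (n : ℤ) : 𝕜 :=
  eulerProd q (2 * N) * invEulerProd q (N - n) * invEulerProd q (N + n)

lemma eulerProd_succ (q : 𝕜) (n : ℕ) :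
    eulerProd q (n + 1) = eulerProd q n * (1 - q ^ (n + 1)) :=
  Finset.prod_range_succ _ _

lemma invEulerProd_natCast (q : 𝕜) (n : ℕ) : invEulerProd q n = (eulerProd q n)⁻¹ := by
  simp [invEulerProd]

lemma invEulerProd_of_neg (q : 𝕜) {k : ℤ} (hk : k < 0) : invEulerProd q k = 0 :=
  if_neg hk.not_ge

lemma invEulerProd_sub_one (hq : ¬IsOfFinOrder q) (k : ℤ) :
    invEulerProd q (k - 1) = (1 - q ^ k) * invEulerProd q k := by
  rcases lt_trichotomy k 0 with hk | rfl | hk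
  · rw [invEulerProd_of_neg q hk, invEulerProd_of_neg q (by lia), mul_zero]
  · rw [invEulerProd_of_neg q (by lia), zpow_zero, sub_self, zero_mul]
  · obtain ⟨n, rfl⟩ : ∃ n : ℕ, k = (n + 1 : ℕ) := ⟨(k - 1).toNat, by lia⟩
    have hn : 1 - q ^ (n + 1) ≠ 0 := fun h ↦
      hq (isOfFinOrder_iff_pow_eq_one.2 ⟨n + 1, n.succ_pos, (sub_eq_zero.1 h).symm⟩)
    rw [invEulerProd_natCast, eulerProd_succ, Nat.cast_succ, add_sub_cancel_right,
      invEulerProd_natCast, ← Nat.cast_succ, zpow_natCast, mul_inv_rev, mul_inv_cancel_left₀ hn]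

lemma centralGaussBinom_zero (q : 𝕜) (n : ℤ) :
    centralGaussBinom q 0 n = if n = 0 then 1 else 0 := by
  split_ifs with hn
  · simp [hn, centralGaussBinom, invEulerProd, eulerProd]
  · rcases lt_or_gt_of_ne hn with hn | hn
    · simp [centralGaussBinom, invEulerProd_of_neg q hn]
    · simp [centralGaussBinom, invEulerProd_of_neg q (neg_neg_of_pos hn)]

lemma centralGaussBinom_succ (hq0 : q ≠ 0) (hq : ¬IsOfFinOrder q) (N : ℕ) (n : ℤ) :
    centralGaussBinom q (N + 1) n =
      (1 + q ^ (2 * N + 1)) * centralGaussBinom q N n +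
        q ^ (N + 1 - n) * centralGaussBinom q N (n - 1) +
        q ^ (N + 1 + n) * centralGaussBinom q N (n + 1) := by
  have lower (k : ℤ) : invEulerProd q k = (1 - q * q ^ k) * invEulerProd q (k + 1) := by
    rw [← zpow_one_add₀ hq0, add_comm 1 k, ← invEulerProd_sub_one hq, add_sub_cancel_right]
  have hprod : q ^ (2 * N) = q ^ (N - n) * q ^ (N + n) := by
    rw [← zpow_add₀ hq0, ← zpow_natCast]
    congr 1
    push_cast
    ring
  simp only [centralGaussBinom, mul_add, mul_one, eulerProd_succ, pow_add, pow_one, Nat.cast_succ]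
  rw [show (N : ℤ) + 1 - n = N - n + 1 by ring, show (N : ℤ) + 1 + n = N + n + 1 by ring,
    show (N : ℤ) - (n - 1) = N - n + 1 by ring, show (N : ℤ) + (n + 1) = N + n + 1 by ring,
    lower (N - (n + 1)), lower (N + (n - 1)), show (N : ℤ) - (n + 1) + 1 = N - n by ring,
    show (N : ℤ) + (n - 1) + 1 = N + n by ring, lower (N - n), lower (N + n),
    show (N : ℤ) - (n + 1) = N - n - 1 by ring, show (N : ℤ) + (n - 1) = N + n - 1 by ring,
    hprod, zpow_add_one₀ hq0, zpow_add_one₀ hq0, zpow_sub_one₀ hq0, zpow_sub_one₀ hq0]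
  field_simp
  ring

lemma centralGaussBinom_succ_mul {z : 𝕜} (hq0 : q ≠ 0) (hq : ¬IsOfFinOrder (q ^ 2)) (hz : z ≠ 0)
    (N : ℕ) (n : ℤ) :
    centralGaussBinom (q ^ 2) (N + 1) n * (z ^ n * q ^ n ^ 2) =
      (1 + (q ^ 2) ^ (2 * N + 1)) * (centralGaussBinom (q ^ 2) N n * (z ^ n * q ^ n ^ 2)) +
        z * q ^ (2 * N + 1) *
          (centralGaussBinom (q ^ 2) N (n - 1) * (z ^ (n - 1) * q ^ (n - 1) ^ 2)) +
        z⁻¹ * q ^ (2 * N + 1) *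
          (centralGaussBinom (q ^ 2) N (n + 1) * (z ^ (n + 1) * q ^ (n + 1) ^ 2)) := by
  have hprev : (q ^ 2) ^ ((N : ℤ) + 1 - n) * q ^ n ^ 2 = q ^ (2 * N + 1) * q ^ (n - 1) ^ 2 := by
    simp only [← zpow_natCast, ← zpow_mul, ← zpow_add₀ hq0]
    congr 1
    push_cast
    ring
  have hnext : (q ^ 2) ^ ((N : ℤ) + 1 + n) * q ^ n ^ 2 = q ^ (2 * N + 1) * q ^ (n + 1) ^ 2 := by
    simp only [← zpow_natCast, ← zpow_mul, ← zpow_add₀ hq0]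
    congr 1
    push_cast
    ring
  rw [centralGaussBinom_succ (pow_ne_zero 2 hq0) hq, zpow_sub_one₀ hz, zpow_add_one₀ hz]
  field_simp
  linear_combination centralGaussBinom (q ^ 2) N (n - 1) * hprev +
    centralGaussBinom (q ^ 2) N (n + 1) * hnext

lemma hasSum_centralGaussBinom [TopologicalSpace 𝕜] [IsTopologicalSemiring 𝕜] {z : 𝕜}
    (hq0 : q ≠ 0) (hq : ¬IsOfFinOrder (q ^ 2)) (hz : z ≠ 0) (N : ℕ) :
    HasSum (fun n : ℤ ↦ centralGaussBinom (q ^ 2) N n * (z ^ n * q ^ n ^ 2))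
      (∏ i ∈ Finset.range N, (1 + z * q ^ (2 * i + 1)) * (1 + z⁻¹ * q ^ (2 * i + 1))) := by
  induction N with
  | zero =>
    refine (hasSum_ite_eq (0 : ℤ) (1 : 𝕜)).congr_fun fun n ↦ ?_
    rw [centralGaussBinom_zero]
    split_ifs with hn <;> simp [hn]
  | succ N ih =>
    have hprev := ((Equiv.subRight (1 : ℤ)).hasSum_iff.2 ih).mul_left (z * q ^ (2 * N + 1))
    have hnext := ((Equiv.addRight (1 : ℤ)).hasSum_iff.2 ih).mul_left (z⁻¹ * q ^ (2 * N + 1))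
    have hfactor : (1 + z * q ^ (2 * N + 1)) * (1 + z⁻¹ * q ^ (2 * N + 1)) =
        1 + (q ^ 2) ^ (2 * N + 1) + z * q ^ (2 * N + 1) + z⁻¹ * q ^ (2 * N + 1) := by
      field_simp
      ring
    rw [Finset.prod_range_succ, mul_comm, hfactor, add_mul, add_mul]
    exact (((ih.mul_left _).add hprev).add hnext).congr_fun
      (centralGaussBinom_succ_mul hq0 hq hz N)

end FiniteTripleProduct

/-! ### Theta series -/

section thetaSeries

variable {𝕜 : Type*} [NormedField 𝕜] {q z : 𝕜}

/-- The two-variable theta series `∑ zⁿ q^(n²)` over `n : ℤ`, that is, Mathlib's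
`jacobiTheta₂ w τ` in the multiplicative variables `q = exp (π i τ)` and `z = exp (2 π i w)`. -/
noncomputable def thetaSeries (q z : 𝕜) : 𝕜 := ∑' n : ℤ, z ^ n * q ^ n ^ 2

lemma summable_norm_pow_mul_pow_sq (hq : ‖q‖ < 1) (z : 𝕜) :
    Summable fun n : ℕ ↦ ‖z ^ n * q ^ n ^ 2‖ := by
  have hratio : Tendsto (fun n : ℕ ↦ ‖z * q ^ (2 * n + 1)‖) atTop (𝓝 0) := by
    have hexp : Tendsto (fun n : ℕ ↦ 2 * n + 1) atTop atTop :=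
      StrictMono.tendsto_atTop fun m n hmn ↦ by lia
    simpa using (((tendsto_pow_atTop_nhds_zero_of_norm_lt_one hq).comp hexp).const_mul z).norm
  refine summable_of_ratio_norm_eventually_le one_half_lt_one ?_
  filter_upwards [hratio.eventually_le_const one_half_pos] with n hn
  rw [norm_norm, norm_norm]
  calc ‖z ^ (n + 1) * q ^ (n + 1) ^ 2‖ = ‖z * q ^ (2 * n + 1)‖ * ‖z ^ n * q ^ n ^ 2‖ := by
        rw [← norm_mul]
        ring_nf
    _ ≤ 1 / 2 * ‖z ^ n * q ^ n ^ 2‖ := by gcongr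

lemma summable_norm_thetaSeries (hq : ‖q‖ < 1) (z : 𝕜) :
    Summable fun n : ℤ ↦ ‖z ^ n * q ^ n ^ 2‖ := by
  refine .of_nat_of_neg ?_ ?_
  · exact_mod_cast summable_norm_pow_mul_pow_sq hq z
  · simp only [zpow_neg, ← inv_zpow, neg_sq]
    exact_mod_cast summable_norm_pow_mul_pow_sq hq z⁻¹

lemma thetaSeries_inv (q z : 𝕜) : thetaSeries q z⁻¹ = thetaSeries q z := by
  rw [thetaSeries, thetaSeries, ← (Equiv.neg ℤ).tsum_eq]
  exact tsum_congr fun n ↦ by simp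

lemma hasSum_thetaSeries_mul [CompleteSpace 𝕜] (hq : ‖q‖ < 1) (a b : 𝕜) :
    HasSum (fun p : ℤ × ℤ ↦ (a ^ p.1 * q ^ p.1 ^ 2) * (b ^ p.2 * q ^ p.2 ^ 2))
      (thetaSeries q a * thetaSeries q b) := by
  have ha := summable_norm_thetaSeries hq a
  have hb := summable_norm_thetaSeries hq b
  rw [thetaSeries, thetaSeries, tsum_mul_tsum_of_summable_norm ha hb]
  exact (summable_mul_of_summable_norm ha hb).hasSum

lemma hasSum_int_prod_of_parity {M : Type*} [AddCommMonoid M] [TopologicalSpace M]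
    [ContinuousAdd M] {f : ℤ × ℤ → M} {a b : M}
    (heven : HasSum (fun p : ℤ × ℤ ↦ f (p.1 - p.2, p.1 + p.2)) a)
    (hodd : HasSum (fun p : ℤ × ℤ ↦ f (p.1 - p.2, p.1 + p.2 + 1)) b) :
    HasSum f (a + b) := by
  let even (p : ℤ × ℤ) : ℤ × ℤ := (p.1 - p.2, p.1 + p.2)
  let odd (p : ℤ × ℤ) : ℤ × ℤ := (p.1 - p.2, p.1 + p.2 + 1)
  have heven_inj : even.Injective := by
    rintro ⟨s, t⟩ ⟨s', t'⟩ h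
    simp only [even, Prod.mk.injEq] at h ⊢
    lia
  have hodd_inj : odd.Injective := by
    rintro ⟨s, t⟩ ⟨s', t'⟩ h
    simp only [odd, Prod.mk.injEq] at h ⊢
    lia
  have hcompl : IsCompl (Set.range even) (Set.range odd) := by
    refine ⟨Set.disjoint_left.2 ?_, codisjoint_iff.2 (Set.eq_univ_of_forall ?_)⟩
    · rintro _ ⟨⟨s, t⟩, rfl⟩ ⟨⟨s', t'⟩, h⟩
      simp only [even, odd, Prod.mk.injEq] at h
      lia
    · rintro ⟨m, n⟩
      rcases Int.even_or_odd' (m + n) with ⟨k, hk | hk⟩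
      · refine Or.inl ⟨(k, n - k), ?_⟩
        simp only [even, Prod.mk.injEq]
        lia
      · refine Or.inr ⟨(k, n - 1 - k), ?_⟩
        simp only [odd, Prod.mk.injEq]
        lia
  exact (heven_inj.hasSum_range_iff.2 heven).add_isCompl hcompl (hodd_inj.hasSum_range_iff.2 hodd)

/-- Schröter's formula for two theta series in the same nome. -/
theorem thetaSeries_mul_thetaSeries [CompleteSpace 𝕜] {a b : 𝕜} (hq0 : q ≠ 0) (hq : ‖q‖ < 1)
    (ha : a ≠ 0) (hb : b ≠ 0) :
    thetaSeries q a * thetaSeries q b =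
      thetaSeries (q ^ 2) (a * b) * thetaSeries (q ^ 2) (b / a) +
        b * q * (thetaSeries (q ^ 2) (a * b * q ^ 2) * thetaSeries (q ^ 2) (b / a * q ^ 2)) := by
  have hq2 := norm_pow_lt_one hq two_ne_zero
  refine (hasSum_thetaSeries_mul hq a b).unique (hasSum_int_prod_of_parity ?_ ?_)
  · refine (hasSum_thetaSeries_mul hq2 (a * b) (b / a)).congr_fun fun ⟨s, t⟩ ↦ ?_
    have hexp : q ^ (s - t) ^ 2 * q ^ (s + t) ^ 2 = (q ^ 2) ^ s ^ 2 * (q ^ 2) ^ t ^ 2 := by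
      simp only [← zpow_natCast, ← zpow_mul, ← zpow_add₀ hq0]
      congr 1
      push_cast
      ring
    simp only [zpow_sub₀ ha, zpow_add₀ hb, mul_zpow, div_zpow]
    linear_combination a ^ s / a ^ t * (b ^ s * b ^ t) * hexp
  · refine ((hasSum_thetaSeries_mul hq2 (a * b * q ^ 2) (b / a * q ^ 2)).mul_left
      (b * q)).congr_fun fun ⟨s, t⟩ ↦ ?_
    have hexp : q ^ (s - t) ^ 2 * q ^ (s + t + 1) ^ 2 =
        q * ((q ^ 2) ^ s * (q ^ 2) ^ s ^ 2 * ((q ^ 2) ^ t * (q ^ 2) ^ t ^ 2)) := by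
      simp only [← zpow_natCast, ← zpow_mul, ← zpow_add₀ hq0, ← zpow_one_add₀ hq0]
      congr 1
      push_cast
      ring
    simp only [zpow_sub₀ ha, zpow_add₀ hb, zpow_one, mul_zpow, div_zpow]
    linear_combination a ^ s / a ^ t * (b ^ s * b ^ t * b) * hexp

end thetaSeries

/-! ### The Jacobi triple product and its specialisations -/

section TripleProduct

variable {q : ℂ}

lemma tendsto_eulerProd (hq : ‖q‖ < 1) : Tendsto (eulerProd q) atTop (𝓝 (qPoch q q)) := by
  refine (tendsto_prod_range_qPoch q hq).congr fun N ↦ ?_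
  simp only [eulerProd, pow_succ']

lemma tendsto_inv_eulerProd (hq : ‖q‖ < 1) :
    Tendsto (fun n ↦ (eulerProd q n)⁻¹) atTop (𝓝 (qPoch q q)⁻¹) :=
  (tendsto_eulerProd hq).inv₀ (qPoch_self_ne_zero hq)

lemma tendsto_invEulerProd (hq : ‖q‖ < 1) :
    Tendsto (invEulerProd q) atTop (𝓝 (qPoch q q)⁻¹) := by
  rw [← Nat.map_cast_int_atTop, tendsto_map'_iff]
  exact (tendsto_inv_eulerProd hq).congr fun n ↦ (invEulerProd_natCast q n).symm

lemma tendsto_centralGaussBinom (hq : ‖q‖ < 1) (n : ℤ) :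
    Tendsto (fun N ↦ centralGaussBinom q N n) atTop (𝓝 (qPoch q q)⁻¹) := by
  have hdouble : Tendsto (fun N : ℕ ↦ 2 * N) atTop atTop :=
    StrictMono.tendsto_atTop fun M N hMN ↦ by lia
  have hcast : Tendsto (fun N : ℕ ↦ (N : ℤ)) atTop atTop := tendsto_natCast_atTop_atTop
  have hsub := (tendsto_invEulerProd hq).comp (tendsto_atTop_add_const_right _ (-n) hcast)
  have hadd := (tendsto_invEulerProd hq).comp (tendsto_atTop_add_const_right _ n hcast)
  have h := (((tendsto_eulerProd hq).comp hdouble).mul hsub).mul hadd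
  rwa [mul_inv_cancel₀ (qPoch_self_ne_zero hq), one_mul] at h

lemma exists_norm_centralGaussBinom_le (hq : ‖q‖ < 1) :
    ∃ C, ∀ N n, ‖centralGaussBinom q N n‖ ≤ C := by
  obtain ⟨A, hA⟩ := (tendsto_eulerProd hq).norm.bddAbove_range
  obtain ⟨B, hB⟩ := (tendsto_inv_eulerProd hq).norm.bddAbove_range
  have hA (n : ℕ) : ‖eulerProd q n‖ ≤ A := hA ⟨n, rfl⟩
  have hA0 : 0 ≤ A := (norm_nonneg _).trans (hA 0)
  have hB0 : 0 ≤ B := (norm_nonneg _).trans (hB ⟨0, rfl⟩)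
  have hB (k : ℤ) : ‖invEulerProd q k‖ ≤ B := by
    rw [invEulerProd]
    split_ifs
    · exact hB ⟨k.toNat, rfl⟩
    · rwa [norm_zero]
  refine ⟨A * B * B, fun N n ↦ ?_⟩
  rw [centralGaussBinom, norm_mul, norm_mul]
  gcongr
  exacts [hA _, hB _, hB _]

/-- The **Jacobi triple product**. -/
theorem thetaSeries_eq_qPoch {z : ℂ} (hq0 : q ≠ 0) (hq : ‖q‖ < 1) (hz : z ≠ 0) :
    thetaSeries q z =
      qPoch (q ^ 2) (q ^ 2) * (qPoch (-(z * q)) (q ^ 2) * qPoch (-(z⁻¹ * q)) (q ^ 2)) := by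
  have hq2 := norm_pow_lt_one hq two_ne_zero
  have hfin : ¬IsOfFinOrder (q ^ 2) := fun h ↦ hq2.ne h.norm_eq_one
  have hsum : Tendsto (fun N ↦ ∑' n : ℤ, centralGaussBinom (q ^ 2) N n * (z ^ n * q ^ n ^ 2))
      atTop (𝓝 (∑' n : ℤ, (qPoch (q ^ 2) (q ^ 2))⁻¹ * (z ^ n * q ^ n ^ 2))) := by
    obtain ⟨C, hC⟩ := exists_norm_centralGaussBinom_le hq2
    refine tendsto_tsum_of_dominated_convergence
      ((summable_norm_thetaSeries hq z).mul_left C)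
      (fun n ↦ (tendsto_centralGaussBinom hq2 n).mul_const _) (.of_forall fun N n ↦ ?_)
    rw [norm_mul]
    gcongr
    exact hC N n
  have hprod : Tendsto (fun N ↦ ∏ i ∈ Finset.range N,
      (1 + z * q ^ (2 * i + 1)) * (1 + z⁻¹ * q ^ (2 * i + 1))) atTop
      (𝓝 (qPoch (-(z * q)) (q ^ 2) * qPoch (-(z⁻¹ * q)) (q ^ 2))) := by
    refine ((tendsto_prod_range_qPoch _ hq2).mul (tendsto_prod_range_qPoch _ hq2)).congr fun N ↦ ?_
    rw [← Finset.prod_mul_distrib]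
    exact Finset.prod_congr rfl fun i _ ↦ by ring
  have hlim := tendsto_nhds_unique
    (hsum.congr fun N ↦ (hasSum_centralGaussBinom hq0 hfin hz N).tsum_eq) hprod
  rw [← hlim, tsum_mul_left, mul_inv_cancel_left₀ (qPoch_self_ne_zero hq2), thetaSeries]

/-- Gauss's product for `∑ q^(n²)`. -/
lemma thetaSeries_one_right (hq0 : q ≠ 0) (hq : ‖q‖ < 1) :
    thetaSeries q 1 = qPoch (q ^ 2) (q ^ 2) ^ 5 / (qPoch q q ^ 2 * qPoch (q ^ 4) (q ^ 4) ^ 2) := by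
  rw [thetaSeries_eq_qPoch hq0 hq one_ne_zero, inv_one, one_mul, qPoch_neg_self_sq hq]
  ring

/-- Euler's pentagonal number theorem for the base `q ^ 2`. -/
lemma thetaSeries_cube_neg_inv (hq0 : q ≠ 0) (hq : ‖q‖ < 1) :
    thetaSeries (q ^ 3) (-q⁻¹) = qPoch (q ^ 2) (q ^ 2) := by
  have hsplit := qPoch_eq_prod_fin (q ^ 2) (norm_pow_lt_one hq two_ne_zero) 3
  simp only [Fin.prod_univ_three, Fin.val_zero, Fin.val_one, Fin.val_two, ← pow_mul, ← pow_add]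
    at hsplit
  rw [thetaSeries_eq_qPoch (pow_ne_zero 3 hq0) (norm_pow_lt_one hq three_ne_zero)
    (neg_ne_zero.2 (inv_ne_zero hq0)), show -(-q⁻¹ * q ^ 3) = q ^ 2 by field_simp,
    show -((-q⁻¹)⁻¹ * q ^ 3) = q ^ 4 by field_simp, ← pow_mul, hsplit]
  ring

lemma thetaSeries_cube_neg_sq (hq0 : q ≠ 0) (hq : ‖q‖ < 1) :
    thetaSeries (q ^ 3) (-q ^ 2) = qPoch q q * qPoch (q ^ 6) (q ^ 6) ^ 2 /
      (qPoch (q ^ 2) (q ^ 2) * qPoch (q ^ 3) (q ^ 3)) := by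
  have hq3 := norm_pow_lt_one hq three_ne_zero
  have h3 := qPoch_self_ne_zero hq3
  have hsplit := qPoch_eq_prod_fin q (norm_pow_lt_one hq two_ne_zero) 3
  simp only [Fin.prod_univ_three, Fin.val_zero, Fin.val_one, Fin.val_two, ← pow_mul, ← pow_succ',
    Nat.reduceMul, Nat.reduceAdd, pow_one] at hsplit
  have hodd := qPoch_self_sq hq3
  simp only [← pow_mul, Nat.reduceMul] at hodd
  rw [qPoch_self_sq hq, hodd] at hsplit
  rw [thetaSeries_eq_qPoch (pow_ne_zero 3 hq0) hq3 (neg_ne_zero.2 (pow_ne_zero 2 hq0)),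
    show -(-q ^ 2 * q ^ 3) = q ^ 5 by ring, show -((-q ^ 2)⁻¹ * q ^ 3) = q by field_simp,
    show (q ^ 3) ^ 2 = q ^ 6 by ring, ← div_mul_div_comm, hsplit]
  field_simp

end TripleProduct

/-! ### The dissection -/

lemma thetaSeries_cube_dissection {𝕜 : Type*} [NormedField 𝕜] [CompleteSpace 𝕜] {q : 𝕜}
    (hq0 : q ≠ 0) (hq : ‖q‖ < 1) :
    thetaSeries (q ^ 3) (-q ^ 2) * thetaSeries (q ^ 3) 1 =
      thetaSeries (q ^ 6) (-(q ^ 2)⁻¹) ^ 2 - q * thetaSeries (q ^ 6) (-q ^ 4) ^ 2 := by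
  have h := thetaSeries_mul_thetaSeries (pow_ne_zero 3 hq0) (norm_pow_lt_one hq three_ne_zero)
    one_ne_zero (neg_ne_zero.2 (inv_ne_zero (pow_ne_zero 2 hq0)))
  rw [one_mul, div_one, ← pow_mul, show -(q ^ 2)⁻¹ * q ^ 3 = -q by field_simp,
    show -(q ^ 2)⁻¹ * q ^ (3 * 2) = -q ^ 4 by field_simp] at h
  rw [← thetaSeries_inv _ (-q ^ 2), inv_neg, mul_comm, h]
  ring

lemma x_eq_thetaSeries_mul {q : ℂ} (hq0 : q ≠ 0) (hq : ‖q‖ < 1) :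
    x q = thetaSeries (q ^ 3) (-q ^ 2) * thetaSeries (q ^ 3) 1 *
      (qPoch (q ^ 12) (q ^ 12) ^ 2 / qPoch (q ^ 6) (q ^ 6) ^ 4) := by
  have h12 := qPoch_self_ne_zero (norm_pow_lt_one hq (by norm_num : 12 ≠ 0))
  have hgauss := thetaSeries_one_right (pow_ne_zero 3 hq0) (norm_pow_lt_one hq three_ne_zero)
  simp only [← pow_mul, Nat.reduceMul] at hgauss
  rw [x_eq_div hq, thetaSeries_cube_neg_sq hq0 hq, hgauss]
  field_simp

theorem two_q_x_two_dissection (q : ℂ) (hq : ‖q‖ < 1) :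
    2 * q * x q =
      -2 * q ^ 2 * qPoch (q ^ 2) (q ^ 2) ^ 2 * qPoch (q ^ 12) (q ^ 12) ^ 6 /
          (qPoch (q ^ 6) (q ^ 6) ^ 6 * qPoch (q ^ 4) (q ^ 4) ^ 2) +
        2 * q * qPoch (q ^ 4) (q ^ 4) ^ 2 * qPoch (q ^ 12) (q ^ 12) ^ 2 /
          qPoch (q ^ 6) (q ^ 6) ^ 4 := by
  rcases eq_or_ne q 0 with rfl | hq0
  · simp
  have hq2 := norm_pow_lt_one hq two_ne_zero
  have heven := thetaSeries_cube_neg_inv (pow_ne_zero 2 hq0) hq2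
  have hodd := thetaSeries_cube_neg_sq (pow_ne_zero 2 hq0) hq2
  simp only [← pow_mul, Nat.reduceMul] at heven hodd
  rw [x_eq_thetaSeries_mul hq0 hq, thetaSeries_cube_dissection hq0 hq, heven, hodd]
  ring
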